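/- Let f : E → ℝ be twice continuously differentiable and ℤⁿ-periodic, let A : E → ℝ be continuous with A x > 0 for all x, and let c be a real constant with c < 0. If Δ f x = A x * f x + c for all x ∈ E, then f x > 0 for every x ∈ E (in particular f is nonnegative). -/

import Mathlib

/-- The Laplacian of `f` at `x`: the sum of the pure second directional derivatives of `f`
at `x` along the standard orthonormal basis directions of `EuclideanSpace ℝ (Fin n)`. -/
noncomputable def laplacian {n : ℕ} (f : EuclideanSpace ℝ (Fin n) → ℝ)
    (x : EuclideanSpace ℝ (Fin n)) : ℝ :=
  ∑ i : Fin n, (iteratedFDeriv ℝ 2 f x)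
    ![EuclideanSpace.single i (1 : ℝ), EuclideanSpace.single i (1 : ℝ)]

/-!
A continuous function that is periodic along a lattice attains its minimum, because its values on
the relatively compact fundamental domain are all its values. At a minimum point `x₀` every second
directional derivative is nonnegative, so `0 ≤ Δ f x₀`. Together with `Δ f x₀ < A x₀ * f x₀` and
`0 ≤ A x₀` this forces the minimum value `f x₀` to be positive.
-/

open scoped Laplacian Topology

section Periodic

variable {E ι α : Type*}

theorem periodic_of_mem_span_int [AddCommGroup E] {f : E → α} {s : Set E}
    (hf : ∀ v ∈ s, Function.Periodic f v) {v : E} (hv : v ∈ Submodule.span ℤ s) :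
    Function.Periodic f v := by
  induction hv using Submodule.span_induction with
  | mem v hv => exact hf v hv
  | zero => exact Function.periodic_with_period_zero f
  | add v w _ _ hv hw => exact hv.add_period hw
  | smul k v _ hv => exact hv.zsmul k

theorem apply_zspan_fract_of_periodic {K : Type*} [NormedField K] [LinearOrder K]
    [IsStrictOrderedRing K] [FloorRing K] [NormedAddCommGroup E] [NormedSpace K E] [Fintype ι]
    (b : Module.Basis ι K E) {f : E → α} (hf : ∀ i, Function.Periodic f (b i)) (x : E) :
    f (ZSpan.fract b x) = f x :=
  (periodic_of_mem_span_int (Set.forall_mem_range.2 hf) (ZSpan.floor b x).2).sub_eq x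

theorem exists_forall_le_of_continuous_of_periodic [NormedAddCommGroup E] [NormedSpace ℝ E]
    [FiniteDimensional ℝ E] [LinearOrder α] [TopologicalSpace α] [ClosedIicTopology α]
    (b : Module.Basis ι ℝ E) {f : E → α} (hf : Continuous f)
    (hper : ∀ i, Function.Periodic f (b i)) : ∃ x₀, ∀ x, f x₀ ≤ f x := by
  have : Fintype ι := FiniteDimensional.fintypeBasisIndex b
  have : ProperSpace E := FiniteDimensional.proper_real E
  have hmem (x : E) : ZSpan.fract b x ∈ closure (ZSpan.fundamentalDomain b) :=
    subset_closure (ZSpan.fract_mem_fundamentalDomain b x)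
  obtain ⟨x₀, -, hx₀⟩ := (ZSpan.fundamentalDomain_isBounded b).isCompact_closure.exists_isMinOn
    ⟨_, hmem 0⟩ hf.continuousOn
  exact ⟨x₀, fun x => (hx₀ (hmem x)).trans_eq (apply_zspan_fract_of_periodic b hper x)⟩

end Periodic

section SecondDerivative

theorem deriv_deriv_comp_add_smul {𝕜 E F : Type*} [NontriviallyNormedField 𝕜]
    [NormedAddCommGroup E] [NormedSpace 𝕜 E] [NormedAddCommGroup F] [NormedSpace 𝕜 F]
    {f : E → F} {x v : E} {t : 𝕜} (hf : ContDiffAt 𝕜 2 f (x + t • v)) :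
    deriv (deriv fun s : 𝕜 => f (x + s • v)) t = iteratedFDeriv 𝕜 2 f (x + t • v) ![v, v] := by
  have hline : Continuous fun s : 𝕜 => x + s • v := by fun_prop
  have hderiv : deriv (fun s : 𝕜 => f (x + s • v)) =ᶠ[𝓝 t] fun s => fderiv 𝕜 f (x + s • v) v := by
    filter_upwards [hline.continuousAt.eventually (hf.eventually (by simp))] with s hs
    exact (hs.differentiableAt two_ne_zero).deriv_comp_add_smul
  have hfderiv : DifferentiableAt 𝕜 (fderiv 𝕜 f) (x + t • v) :=
    (hf.fderiv_right (m := 1) (by norm_num)).differentiableAt one_ne_zero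
  rw [hderiv.deriv_eq, iteratedFDeriv_two_apply,
    (hfderiv.clm_apply (differentiableAt_const v)).deriv_comp_add_smul,
    fderiv_clm_apply hfderiv (differentiableAt_const v)]
  simp

theorem deriv_deriv_nonneg_of_isLocalMin {g : ℝ → ℝ} {a : ℝ} (hmin : IsLocalMin g a)
    (hg : ContinuousAt g a) : 0 ≤ deriv (deriv g) a := by
  by_contra! hneg
  -- A negative second derivative makes `a` a local maximum as well, so `g` is constant near `a`.
  have hmax : IsLocalMax g a := isLocalMax_of_deriv_deriv_neg hneg hmin.deriv_eq_zero hg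
  have hconst : g =ᶠ[𝓝 a] fun _ => g a := by
    filter_upwards [hmin, hmax] with y hle hge using le_antisymm hge hle
  have hzero : deriv (deriv g) a = 0 := by
    rw [hconst.deriv.deriv_eq]
    simp
  exact hneg.ne hzero

theorem iteratedFDeriv_two_nonneg_of_isLocalMin {E : Type*} [NormedAddCommGroup E]
    [NormedSpace ℝ E] {f : E → ℝ} {x : E} (hmin : IsLocalMin f x) (hf : ContDiffAt ℝ 2 f x)
    (v : E) : 0 ≤ iteratedFDeriv ℝ 2 f x ![v, v] := by
  have hx : x + (0 : ℝ) • v = x := by simp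
  rw [← hx] at hmin hf ⊢
  have hline : ContinuousAt (fun t : ℝ => x + t • v) 0 := by fun_prop
  rw [← deriv_deriv_comp_add_smul hf]
  exact deriv_deriv_nonneg_of_isLocalMin
    (IsLocalMin.comp_continuous (g := fun t : ℝ => x + t • v) hmin hline)
    (hf.continuousAt.comp (f := fun t : ℝ => x + t • v) hline)

end SecondDerivative

section Laplacian

variable {E : Type*} [NormedAddCommGroup E] [InnerProductSpace ℝ E] [FiniteDimensional ℝ E]

theorem laplacian_nonneg_of_isLocalMin {f : E → ℝ} {x : E} (hmin : IsLocalMin f x)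
    (hf : ContDiffAt ℝ 2 f x) : 0 ≤ Δ f x := by
  rw [InnerProductSpace.laplacian_eq_iteratedFDeriv_stdOrthonormalBasis]
  exact Finset.sum_nonneg fun i _ => iteratedFDeriv_two_nonneg_of_isLocalMin hmin hf _

theorem laplacian_eq_innerProductSpace_laplacian {n : ℕ} (f : EuclideanSpace ℝ (Fin n) → ℝ) :
    laplacian f = Δ f := by
  rw [InnerProductSpace.laplacian_eq_iteratedFDeriv_orthonormalBasis f
    (EuclideanSpace.basisFun (Fin n) ℝ)]
  ext x
  simp only [laplacian, EuclideanSpace.basisFun_apply]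

theorem pos_of_laplacian_eq_pos_mul_add_neg_const_general {ι : Type*} (b : Module.Basis ι ℝ E)
    {f A : E → ℝ} (hf : ContDiff ℝ 2 f) (hper : ∀ i, Function.Periodic f (b i))
    (hA : ∀ x, 0 ≤ A x) (hlt : ∀ x, Δ f x < A x * f x) (x : E) : 0 < f x := by
  obtain ⟨x₀, hx₀⟩ := exists_forall_le_of_continuous_of_periodic b hf.continuous hper
  have hlap : 0 ≤ Δ f x₀ :=
    laplacian_nonneg_of_isLocalMin (Filter.Eventually.of_forall hx₀) hf.contDiffAt
  have hpos : 0 < f x₀ := pos_of_mul_pos_right (hlap.trans_lt (hlt x₀)) (hA x₀)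
  exact hpos.trans_le (hx₀ x)

end Laplacian

theorem pos_of_laplacian_eq_pos_mul_add_neg_const {n : ℕ} (hn : 0 < n)
    (f : EuclideanSpace ℝ (Fin n) → ℝ) (hf : ContDiff ℝ 2 f)
    (hper : ∀ (x : EuclideanSpace ℝ (Fin n)) (i : Fin n),
      f (x + EuclideanSpace.single i (1 : ℝ)) = f x)
    (A : EuclideanSpace ℝ (Fin n) → ℝ) (hA : Continuous A)
    (hApos : ∀ x, 0 < A x)
    (c : ℝ) (hc : c < 0)
    (heq : ∀ x, laplacian f x = A x * f x + c) :
    ∀ x, 0 < f x := by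
  rw [laplacian_eq_innerProductSpace_laplacian] at heq
  exact pos_of_laplacian_eq_pos_mul_add_neg_const_general
    (EuclideanSpace.basisFun (Fin n) ℝ).toBasis hf
    (fun i x => by simpa using hper x i) (fun x => (hApos x).le) fun x => by linarith [heq x]
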